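/- arXiv:math/0606092 — 2 statements merged into one kernel-verified Lean document; each statement's English description precedes it below -/
import Mathlib

section
/- Let 0 < q ≤ 1, η > 0, θ ≥ 0, τ ≥ 0, and fix t with t > θ/η + (1−q)/η². Let μ_t be a probability measure on ℝ with finite moments of all orders such that ∫ p_m(y;t) p_n(y;t) μ_t(dy) = 0 whenever m ≠ n. Define k_* = max{k ≥ 0 : t > θ/η + 2τk} if q = 1, and k_* = max{k ≥ 0 : q^{2k} > ((1−q)² + (1−q)ηθ + η²τ)/(η²(t(1−q) + τ))} if 0 < q < 1, and set y_* = max{x_{k_*}(t), x_{k_*+1}(t)}. Then μ_t(ℝ \ ({x_0(t), x_1(t), …, x_{k_*}(t)} ∪ [y_*, ∞))) = 0. -/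
/-- `[n]_q = 1 + q + ⋯ + q^{n-1}`. -/
noncomputable def qnum (q : ℝ) (n : ℕ) : ℝ := ∑ i ∈ Finset.range n, q ^ i

/-- `[n]_q! = [1]_q [2]_q ⋯ [n]_q`. -/
noncomputable def qfact (q : ℝ) (n : ℕ) : ℝ := ∏ i ∈ Finset.range n, qnum q (i + 1)

/-- q-binomial coefficient `[n choose k]_q`, with the convention that it is `0` for `k > n`. -/
noncomputable def qbinom (q : ℝ) (n k : ℕ) : ℝ :=
  if k ≤ n then qfact q n / (qfact q (n - k) * qfact q k) else 0

/-- `a_n = η⁻¹ + θ[n]_q + [n]_q² ητ`. -/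
noncomputable def aCoef (η θ τ q : ℝ) (n : ℕ) : ℝ :=
  η⁻¹ + θ * qnum q n + (qnum q n) ^ 2 * η * τ

/-- `b_n(t) = (tη + θ + ([n]_q + [n-1]_q)ητ)[n]_q`. -/
noncomputable def bCoef (η θ τ q t : ℝ) (n : ℕ) : ℝ :=
  (t * η + θ + (qnum q n + qnum q (n - 1)) * η * τ) * qnum q n

/-- `c_n(t) = η(t + τ[n-1]_q)[n]_q`. -/
noncomputable def cCoef (η τ q t : ℝ) (n : ℕ) : ℝ :=
  η * (t + τ * qnum q (n - 1)) * qnum q n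

/-- `A_n(x,s) = a_n + q^n x - sη q^n [n]_q`. -/
noncomputable def ACoef (η θ τ q x s : ℝ) (n : ℕ) : ℝ :=
  aCoef η θ τ q n + q ^ n * x - s * η * q ^ n * qnum q n

/-- `x_k(s) = ((sη q^k - θ)[k]_q - η⁻¹ - ητ[k]_q²)/q^k`, the zero of `x ↦ A_k(x,s)`. -/
noncomputable def xPt (η θ τ q s : ℝ) (k : ℕ) : ℝ :=
  ((s * η * q ^ k - θ) * qnum q k - η⁻¹ - η * τ * (qnum q k) ^ 2) / q ^ k

open MeasureTheory

section
open Polynomial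

/-- `P` is an orthogonal family for `M` with `P_n(x0) = (-1)^n` (factorised recurrence). -/
structure OGood (M : Measure ℝ) (a c : ℕ → ℝ) (x0 : ℝ) (P : ℕ → ℝ[X]) : Prop where
  fin : IsFiniteMeasure M
  int : ∀ R : ℝ[X], Integrable (fun y => R.eval y) M
  apos : ∀ n, 0 < a n
  c0 : c 0 = 0
  cpos : ∀ n, 0 < c (n + 1)
  P0 : P 0 = 1
  recur : ∀ n, (X - C x0) * P n = C (a n) * (P (n + 1) + P n) + C (c n) * (P n + P (n - 1))
  orth : ∀ m n, m ≠ n → ∫ y, (P m * P n).eval y ∂M = 0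

/-- Signed values `(-1)^n P_n(y)`. -/
noncomputable def eVal (P : ℕ → ℝ[X]) (y : ℝ) (n : ℕ) : ℝ := (-1) ^ n * (P n).eval y

lemma OGood.e_rec {M a c x0 P} (h : OGood M a c x0 P) (y : ℝ) (n : ℕ) :
    a (n + 1) * (eVal P y (n + 2) - eVal P y (n + 1))
      = c (n + 1) * (eVal P y (n + 1) - eVal P y n) + (x0 - y) * eVal P y (n + 1) := by
  have := congrArg (fun R : ℝ[X] => R.eval y) (h.recur (n + 1))
  simp at this
  simp only [eVal, pow_succ]
  linear_combination -(-1) ^ n * this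

lemma OGood.e_zero {M a c x0 P} (h : OGood M a c x0 P) (y : ℝ) : eVal P y 0 = 1 := by
  simp [eVal, h.P0]

lemma OGood.e_one {M a c x0 P} (h : OGood M a c x0 P) (y : ℝ) :
    a 0 * (eVal P y 1 - eVal P y 0) = (x0 - y) * eVal P y 0 := by
  have := congrArg (fun R : ℝ[X] => R.eval y) (h.recur 0)
  simp [h.c0, h.P0] at this
  simp [eVal, h.P0]
  linear_combination this

lemma OGood.e_mono {M a c x0 P} (h : OGood M a c x0 P) {y z : ℝ} (hz : z ≤ x0) (hy : y ≤ z)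
    (n : ℕ) : 1 ≤ eVal P z n ∧ eVal P z n ≤ eVal P y n ∧ 0 ≤ eVal P z (n + 1) - eVal P z n ∧
      eVal P z (n + 1) - eVal P z n ≤ eVal P y (n + 1) - eVal P y n := by
  induction n with
  | zero =>
    have h1 := h.e_one y
    have h2 := h.e_one z
    have ha := h.apos 0
    rw [h.e_zero] at h1 h2
    rw [h.e_zero, h.e_zero]
    simp only [zero_add]
    refine ⟨le_rfl, le_rfl, ?_, ?_⟩
    · by_contra hc
      push Not at hc
      nlinarith
    · by_contra hc
      push Not at hc
      nlinarith
  | succ n ih =>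
    obtain ⟨i1, i2, i3, i4⟩ := ih
    have h1 := h.e_rec y n
    have h2 := h.e_rec z n
    have ha := h.apos (n + 1)
    have hc := h.cpos n
    have j1 : 1 ≤ eVal P z (n + 1) := by linarith
    have j2 : eVal P z (n + 1) ≤ eVal P y (n + 1) := by linarith
    refine ⟨j1, j2, ?_, ?_⟩
    · refine nonneg_of_mul_nonneg_right ?_ ha
      rw [h2]
      have := mul_nonneg hc.le i3
      have := mul_nonneg (sub_nonneg.2 hz) (zero_le_one.trans j1)
      linarith
    · refine le_of_mul_le_mul_left ?_ ha
      rw [h1, h2]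
      have := mul_le_mul_of_nonneg_left i4 hc.le
      have : (x0 - z) * eVal P z (n + 1) ≤ (x0 - y) * eVal P y (n + 1) := by
        apply mul_le_mul <;> linarith
      linarith

/-- squared norms -/
noncomputable def nrm (M : Measure ℝ) (P : ℕ → ℝ[X]) (n : ℕ) : ℝ := ∫ y, (P n * P n).eval y ∂M

lemma OGood.nrm_rec {M a c x0 P} (h : OGood M a c x0 P) (n : ℕ) :
    a n * nrm M P (n + 1) = c (n + 1) * nrm M P n := by
  have e1 : ((X - C x0) * P n) * P (n + 1) = C (a n) * (P (n + 1) * P (n + 1))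
     + C (a n) * (P n * P (n + 1)) + C (c n) * (P n * P (n + 1))
     + C (c n) * (P (n - 1) * P (n + 1)) := by rw [h.recur]; ring
  have e2 : ((X - C x0) * P n) * P (n + 1) = C (a (n + 1)) * (P (n + 2) * P n)
     + C (a (n + 1)) * (P (n + 1) * P n) + C (c (n + 1)) * (P (n + 1) * P n)
     + C (c (n + 1)) * (P n * P n) := by
    have := h.recur (n + 1)
    simp only [Nat.add_sub_cancel] at this
    linear_combination P n * this
  have key := e1.symm.trans e2
  have key2 := congrArg (fun R : ℝ[X] => ∫ y, R.eval y ∂M) key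
  have hadd : ∀ R S : ℝ[X], ∫ y, (R + S).eval y ∂M = ∫ y, R.eval y ∂M + ∫ y, S.eval y ∂M := by
    intro R S
    simp only [eval_add]
    exact integral_add (h.int R) (h.int S)
  have hsmul : ∀ (r : ℝ) (S : ℝ[X]), ∫ y, (C r * S).eval y ∂M = r * ∫ y, S.eval y ∂M := by
    intro r S
    simp only [eval_mul, eval_C]
    exact integral_const_mul _ _
  simp only [hadd, hsmul] at key2
  rw [h.orth n (n + 1) (by omega), h.orth (n - 1) (n + 1) (by omega),
    h.orth (n + 2) n (by omega), h.orth (n + 1) n (by omega)] at key2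
  simpa [nrm] using key2

lemma OGood.nrm_zero {M a c x0 P} (h : OGood M a c x0 P) : nrm M P 0 = M.real Set.univ := by
  simp [nrm, h.P0]

lemma OGood.nrm_pos {M a c x0 P} (h : OGood M a c x0 P) (h0 : 0 < M.real Set.univ) (n : ℕ) :
    0 < nrm M P n := by
  induction n with
  | zero => rwa [h.nrm_zero]
  | succ n ih =>
    have h1 := h.nrm_rec n
    refine pos_of_mul_pos_right ?_ (h.apos n).le
    rw [h1]
    exact mul_pos (h.cpos n) ih

/-- The kernel polynomial bound. -/
lemma OGood.kernel_bound {M a c x0 P} (h : OGood M a c x0 P) (h0 : 0 < M.real Set.univ)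
    {z : ℝ} (hz : z ≤ x0) (N : ℕ) :
    M.real (Set.Iic z) * (∑ n ∈ Finset.range N, eVal P z n ^ 2 / nrm M P n) ≤ 1 := by
  have := h.fin
  set K := ∑ n ∈ Finset.range N, eVal P z n ^ 2 / nrm M P n with hK
  let Q : ℝ[X] := ∑ n ∈ Finset.range N, C (eVal P z n / nrm M P n * (-1) ^ n) * P n
  have hQ : ∀ y, Q.eval y = ∑ n ∈ Finset.range N, eVal P z n / nrm M P n * eVal P y n := by
    intro y
    simp only [Q, eval_finsetSum, eval_mul, eval_C, eVal]
    exact Finset.sum_congr rfl fun n _ => by ring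
  have hpos := h.nrm_pos h0
  have hK0 : 0 ≤ K := Finset.sum_nonneg fun n _ => div_nonneg (sq_nonneg _) (hpos n).le
  have hQge : ∀ y ∈ Set.Iic z, K ^ 2 ≤ (Q * Q).eval y := by
    intro y hy
    have : K ≤ Q.eval y := by
      rw [hQ, hK]
      refine Finset.sum_le_sum fun n _ => ?_
      obtain ⟨m1, m2, -, -⟩ := h.e_mono hz hy n
      rw [sq, mul_div_right_comm]
      exact mul_le_mul_of_nonneg_left m2 (div_nonneg (by linarith) (hpos n).le)
    rw [eval_mul, ← sq]
    exact pow_le_pow_left₀ hK0 this 2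
  have hint : ∫ y, (Q * Q).eval y ∂M = K := by
    have e : ∀ y, (Q * Q).eval y = ∑ m ∈ Finset.range N, ∑ n ∈ Finset.range N,
        (eVal P z m / nrm M P m * (-1) ^ m) * (eVal P z n / nrm M P n * (-1) ^ n) *
          (P m * P n).eval y := by
      intro y
      simp only [Q, eval_mul, eval_finsetSum, eval_C, Finset.sum_mul_sum]
      exact Finset.sum_congr rfl fun m _ => Finset.sum_congr rfl fun n _ => by ring
    simp only [e]
    rw [integral_finsetSum _ fun m _ => integrable_finsetSum _ fun n _ => (h.int _).const_mul _]
    rw [hK]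
    refine Finset.sum_congr rfl fun m hm => ?_
    rw [integral_finsetSum _ fun n _ => (h.int _).const_mul _]
    rw [Finset.sum_eq_single_of_mem m hm]
    · rw [integral_const_mul]
      change _ * nrm M P m = _
      have := (hpos m).ne'
      have h1 : ((-1 : ℝ) ^ m) * (-1) ^ m = 1 := by rw [← mul_pow]; simp
      field_simp
      linear_combination (eVal P z m) ^ 2 * h1
    · intro n _ hn
      rw [integral_const_mul, h.orth m n (Ne.symm hn), mul_zero]
  have h2 : M.real (Set.Iic z) * K ^ 2 ≤ K := by
    calc M.real (Set.Iic z) * K ^ 2 = ∫ y in Set.Iic z, K ^ 2 ∂M := by simp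
      _ ≤ ∫ y in Set.Iic z, (Q * Q).eval y ∂M :=
          setIntegral_mono_on (integrable_const _) (h.int _).integrableOn measurableSet_Iic hQge
      _ ≤ ∫ y, (Q * Q).eval y ∂M := setIntegral_le_integral (h.int _)
          (Filter.Eventually.of_forall fun y => by simp only [eval_mul]; exact mul_self_nonneg _)
      _ = K := hint
  rcases hK0.eq_or_lt with hk | hk
  · rw [← hk]; simp
  · refine le_of_mul_le_mul_right ?_ hk
    linarith [h2, sq K, mul_assoc (M.real (Set.Iic z)) K K, show
      M.real (Set.Iic z) * K ^ 2 = M.real (Set.Iic z) * K * K by ring]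

lemma OGood.diff_lower {M a c x0 P} (h : OGood M a c x0 P) (h0 : 0 < M.real Set.univ)
    {z : ℝ} (hz : z ≤ x0) (n : ℕ) :
    (x0 - z) * nrm M P n ≤ nrm M P 0 * (a n * (eVal P z (n + 1) - eVal P z n)) := by
  have hpos := h.nrm_pos h0
  induction n with
  | zero =>
    have := h.e_one z
    rw [zero_add, this, h.e_zero]
    linarith
  | succ n ih =>
    have hr := h.nrm_rec n
    rw [h.e_rec]
    have ha := h.apos n
    have hc := h.cpos n
    have m1 := (h.e_mono hz le_rfl (n + 1)).1
    have : (x0 - z) * nrm M P (n + 1) ≤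
        nrm M P 0 * (c (n + 1) * (eVal P z (n + 1) - eVal P z n)) := by
      refine le_of_mul_le_mul_left ?_ ha
      calc a n * ((x0 - z) * nrm M P (n + 1)) = c (n + 1) * ((x0 - z) * nrm M P n) := by
            linear_combination (x0 - z) * hr
        _ ≤ c (n + 1) * (nrm M P 0 * (a n * (eVal P z (n + 1) - eVal P z n))) :=
            mul_le_mul_of_nonneg_left ih hc.le
        _ = _ := by ring
    have h3 : 0 ≤ nrm M P 0 * ((x0 - z) * eVal P z (n + 1)) :=
      mul_nonneg (hpos 0).le (mul_nonneg (by linarith) (by linarith))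
    linarith

lemma OGood.term_lower {M a c x0 P} (h : OGood M a c x0 P) (h0 : 0 < M.real Set.univ)
    {z : ℝ} (hz : z < x0) {D : ℝ} (hD : 0 < D) (n : ℕ)
    (haD : a n ≤ D ^ 2 * (n + 1) ^ 2) (hcD : c (n + 1) ≤ D ^ 2 * (n + 1) ^ 2) :
    1 / D * (1 / ((n : ℝ) + 1)) ≤
      (eVal P z n ^ 2 / nrm M P n + eVal P z (n + 1) ^ 2 / nrm M P (n + 1)) / 2
      + nrm M P 0 / (x0 - z) * (1 / eVal P z n - 1 / eVal P z (n + 1)) := by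
  have hpos := h.nrm_pos h0
  have hr := h.nrm_rec n
  have ha := h.apos n
  have hc := h.cpos n
  have hd := h.diff_lower h0 hz.le n
  have he1 := (h.e_mono hz.le le_rfl n).1
  have he2 := (h.e_mono hz.le le_rfl (n + 1)).1
  have p1 := hpos n
  have p2 := hpos (n + 1)
  have p0 := hpos 0
  set e := eVal P z n
  set f := eVal P z (n + 1)
  set H := nrm M P n
  set G := nrm M P (n + 1)
  have e0 : 0 < e := by linarith
  have f0 : 0 < f := by linarith
  have hδ : 0 < x0 - z := by linarith
  set w := H / (a n * e * f) with hw
  have w0 : 0 < w := by positivity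
  have w1 : w ≤ nrm M P 0 / (x0 - z) * (1 / e - 1 / f) := by
    have : nrm M P 0 / (x0 - z) * (1 / e - 1 / f)
      = nrm M P 0 * (a n * (f - e)) / ((x0 - z) * (a n * e * f)) := by field_simp
    rw [this, hw, div_le_div_iff₀ (by positivity) (by positivity)]
    have := mul_le_mul_of_nonneg_right hd (show 0 ≤ a n * e * f by positivity)
    linarith
  set s := e ^ 2 / H with hs
  set s' := f ^ 2 / G with hs'
  have s0 : 0 < s := by positivity
  have s0' : 0 < s' := by positivity
  have prod : s * s' * w ^ 2 = 1 / (a n * c (n + 1)) := by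
    have : a n * c (n + 1) = a n * (a n * G / H) := by rw [hr]; field_simp
    rw [this, hs, hs', hw]
    field_simp
  set L : ℝ := 1 / D * (1 / ((n : ℝ) + 1)) with hL
  have L0 : 0 < L := by positivity
  have lo : L ^ 4 ≤ s * s' * w ^ 2 := by
    rw [prod]
    have : L ^ 4 = 1 / ((D ^ 2 * (n + 1) ^ 2) * (D ^ 2 * (n + 1) ^ 2)) := by
      rw [hL]; field_simp
    rw [this]
    apply one_div_le_one_div_of_le (by positivity)
    exact mul_le_mul haD hcD hc.le (by positivity)
  have l2 : L ^ 2 ≤ (s + s') / 2 * w := by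
    have : (L ^ 2) ^ 2 ≤ ((s + s') / 2 * w) ^ 2 := by
      nlinarith [mul_nonneg (sq_nonneg (s - s')) (sq_nonneg w)]
    exact le_of_sq_le_sq this (by positivity)
  have l3 : L ≤ (s + s') / 2 + w := by
    have : L ^ 2 ≤ ((s + s') / 2 + w) ^ 2 := by
      nlinarith [sq_nonneg ((s + s') / 2 - w), mul_pos (add_pos s0 s0') w0]
    exact le_of_sq_le_sq this (by positivity)
  linarith

lemma OGood.null_Iic {M a c x0 P} (h : OGood M a c x0 P)
    (hg : ∃ D : ℝ, 0 < D ∧ ∀ n : ℕ, a n ≤ D ^ 2 * (n + 1) ^ 2 ∧ c (n + 1) ≤ D ^ 2 * (n + 1) ^ 2)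
    {z : ℝ} (hz : z < x0) : M (Set.Iic z) = 0 := by
  have := h.fin
  obtain ⟨D, hD, hg⟩ := hg
  by_contra hne
  have hm : 0 < M.real (Set.Iic z) := ENNReal.toReal_pos hne (measure_ne_top _ _)
  have h0 : 0 < M.real Set.univ := hm.trans_le (measureReal_mono (Set.subset_univ _))
  have hpos := h.nrm_pos h0
  set m := M.real (Set.Iic z)
  have hK : ∀ N, ∑ n ∈ Finset.range N, eVal P z n ^ 2 / nrm M P n ≤ 1 / m := by
    intro N
    rw [le_div_iff₀ hm]
    linarith [h.kernel_bound h0 hz.le N]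
  have hb : ∀ N, ∑ n ∈ Finset.range N, 1 / D * (1 / ((n : ℝ) + 1)) ≤
      1 / m + nrm M P 0 / (x0 - z) := by
    intro N
    refine (Finset.sum_le_sum fun n _ => h.term_lower h0 hz hD n (hg n).1 (hg n).2).trans ?_
    rw [Finset.sum_add_distrib, ← Finset.sum_div, Finset.sum_add_distrib, ← Finset.mul_sum,
      Finset.sum_range_sub' (fun n => 1 / eVal P z n)]
    have k1 := hK N
    have k2 := hK (N + 1)
    rw [Finset.sum_range_succ'] at k2
    have k3 : 0 ≤ eVal P z 0 ^ 2 / nrm M P 0 := div_nonneg (sq_nonneg _) (hpos 0).le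
    have k4 : 1 / eVal P z 0 - 1 / eVal P z N ≤ 1 := by
      rw [h.e_zero]
      have := (h.e_mono hz.le le_rfl N).1
      have : 0 ≤ 1 / eVal P z N := by positivity
      linarith
    have k5 : nrm M P 0 / (x0 - z) * (1 / eVal P z 0 - 1 / eVal P z N)
        ≤ nrm M P 0 / (x0 - z) * 1 :=
      mul_le_mul_of_nonneg_left k4 (div_nonneg (hpos 0).le (by linarith))
    linarith
  have hdiv := Real.tendsto_sum_range_one_div_nat_succ_atTop
  have := (hdiv.const_mul_atTop (show 0 < 1 / D by positivity)).eventually_gt_atTop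
    (1 / m + nrm M P 0 / (x0 - z))
  obtain ⟨N, hN⟩ := this.exists
  have := hb N
  rw [← Finset.mul_sum] at this
  linarith

lemma OGood.null_Iio {M a c x0 P} (h : OGood M a c x0 P)
    (hg : ∃ D : ℝ, 0 < D ∧ ∀ n : ℕ, a n ≤ D ^ 2 * (n + 1) ^ 2 ∧ c (n + 1) ≤ D ^ 2 * (n + 1) ^ 2) :
    M (Set.Iio x0) = 0 := by
  have : Set.Iio x0 ⊆ ⋃ n : ℕ, Set.Iic (x0 - 1 / ((n : ℝ) + 1)) := by
    intro y hy
    obtain ⟨n, hn⟩ := exists_nat_one_div_lt (sub_pos.2 (Set.mem_Iio.1 hy))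
    refine Set.mem_iUnion.2 ⟨n, ?_⟩
    simp only [Set.mem_Iic]
    linarith
  refine measure_mono_null this (measure_iUnion_null fun n => h.null_Iic hg ?_)
  have : (0 : ℝ) < 1 / ((n : ℝ) + 1) := by positivity
  linarith

/-- Christoffel transform, unnormalised. -/
noncomputable def chr (a c : ℕ → ℝ) (P : ℕ → ℝ[X]) : ℕ → ℝ[X]
  | 0 => C (1 / a 0)
  | n + 1 => C (1 / a (n + 1)) * (P (n + 1) - C (c (n + 1)) * chr a c P n)

lemma OGood.chr_rel {M a c x0 P} (h : OGood M a c x0 P) (n : ℕ) :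
    P (n + 1) = C (a (n + 1)) * chr a c P (n + 1) + C (c (n + 1)) * chr a c P n := by
  have : C (a (n + 1)) * C (1 / a (n + 1)) = (1 : ℝ[X]) := by
    rw [← C_mul, mul_one_div_cancel (h.apos _).ne', C_1]
  rw [chr]
  linear_combination -(P (n + 1) - C (c (n + 1)) * chr a c P n) * this

lemma OGood.chr_mul {M a c x0 P} (h : OGood M a c x0 P) (n : ℕ) :
    (X - C x0) * chr a c P n = P (n + 1) + P n := by
  have inv : ∀ n, C (1 / a n) * C (a n) = (1 : ℝ[X]) := by
    intro n
    rw [← C_mul, one_div_mul_cancel (h.apos _).ne', C_1]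
  induction n with
  | zero =>
    have := h.recur 0
    rw [h.c0, h.P0] at this
    simp only [C_0, zero_mul, add_zero, mul_one, zero_add] at this
    rw [chr, this, h.P0]
    simp only [zero_add]
    linear_combination (P 1 + 1) * inv 0
  | succ n ih =>
    have := h.recur (n + 1)
    simp only [Nat.add_sub_cancel] at this
    rw [chr]
    linear_combination C (1 / a (n + 1)) * this - C (1 / a (n + 1)) * C (c (n + 1)) * ih
      + (P (n + 1 + 1) + P (n + 1)) * inv (n + 1)

lemma OGood.chr_orth {M a c x0 P} (h : OGood M a c x0 P) (m : ℕ) :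
    ∀ n, m < n → ∫ y, (chr a c P m * P n).eval y ∂M = 0 := by
  induction m with
  | zero =>
    intro n hn
    have := h.orth 0 n (by omega)
    simp only [h.P0, one_mul] at this
    simp only [chr, eval_mul, eval_C]
    rw [integral_const_mul, this, mul_zero]
  | succ m ih =>
    intro n hn
    have e : ∀ y, (chr a c P (m + 1) * P n).eval y = 1 / a (m + 1) * (P (m + 1) * P n).eval y
        - 1 / a (m + 1) * c (m + 1) * (chr a c P m * P n).eval y := by
      intro y
      simp only [chr, eval_mul, eval_C, eval_sub]
      ring
    simp only [e]
    rw [integral_sub ((h.int _).const_mul _) ((h.int _).const_mul _), integral_const_mul,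
      integral_const_mul, h.orth _ _ hn.ne, ih n (by omega)]
    simp

lemma OGood.int_wd {M a c x0 P} (h : OGood M a c x0 P) (h0 : M (Set.Iio x0) = 0) (R : ℝ[X]) :
    Integrable (fun y => R.eval y) (M.withDensity fun y => ENNReal.ofReal (y - x0)) ∧
    ∫ y, R.eval y ∂(M.withDensity fun y => ENNReal.ofReal (y - x0))
      = ∫ y, ((X - C x0) * R).eval y ∂M := by
  have hm : Measurable fun y : ℝ => ENNReal.ofReal (y - x0) := by fun_prop
  have hlt : ∀ᵐ y ∂M, ENNReal.ofReal (y - x0) < ⊤ := by simp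
  have hae : ∀ᵐ y ∂M, (ENNReal.ofReal (y - x0)).toReal • R.eval y = ((X - C x0) * R).eval y := by
    have : ∀ᵐ y ∂M, y ∉ Set.Iio x0 := measure_eq_zero_iff_ae_notMem.1 h0
    filter_upwards [this] with y hy
    have : x0 ≤ y := by simpa using hy
    rw [ENNReal.toReal_ofReal (by linarith)]
    simp
  constructor
  · rw [integrable_withDensity_iff_integrable_smul' hm hlt]
    exact (h.int _).congr (hae.mono fun y hy => hy.symm)
  · rw [integral_withDensity_eq_integral_toReal_smul hm hlt]
    exact integral_congr_ae hae

lemma OGood.step {M a c x0 P} (h : OGood M a c x0 P) (h0 : M (Set.Iio x0) = 0)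
    {q x1 : ℝ} (hq : 0 < q)
    (hx : ∀ n, x1 - x0 = a n + c (n + 1) - a (n + 1) / q - q * c n) :
    OGood (M.withDensity fun y => ENNReal.ofReal (y - x0)) (fun n => a (n + 1) / q)
      (fun n => q * c n) x1 (fun n => C (a 0 * q ^ n) * chr a c P n) where
  fin := by
    have := (h.int_wd h0 1).1
    simp only [eval_one] at this
    exact (integrable_const_iff_isFiniteMeasure one_ne_zero).1 this
  int R := (h.int_wd h0 R).1
  apos n := div_pos (h.apos _) hq
  c0 := by simp [h.c0]
  cpos n := mul_pos hq (h.cpos _)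
  P0 := by
    simp only [chr, pow_zero, mul_one, ← C_mul]
    rw [mul_one_div_cancel (h.apos _).ne', C_1]
  recur n := by
    have hx' : (C x1 : ℝ[X]) = C x0 + C (a n) + C (c (n + 1)) - C (a (n + 1) / q)
        - C (q * c n) := by
      rw [← C_add, ← C_add, ← C_sub, ← C_sub]
      congr 1
      linear_combination hx n
    have hm := h.chr_mul n
    have r1 := h.chr_rel n
    have hq1 : C (a (n + 1) / q) * C q = (C (a (n + 1)) : ℝ[X]) := by
      rw [← C_mul, div_mul_cancel₀ _ hq.ne']
    cases n with
    | zero =>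
      have hP : P 0 = C (a 0) * chr a c P 0 := by
        rw [chr, ← C_mul, mul_one_div_cancel (h.apos _).ne', C_1, h.P0]
      simp only [h.c0, mul_zero, C_0, zero_mul, add_zero, pow_zero, mul_one, zero_add, pow_one,
        sub_zero, C_mul] at *
      rw [hx']
      linear_combination C (a 0) * hm + C (a 0) * r1 + C (a 0) * hP
        - C (a 0) * chr a c P 1 * hq1
    | succ m =>
      have r0 := h.chr_rel m
      simp only [C_mul, C_pow, Nat.add_sub_cancel, pow_succ] at *
      rw [hx']
      linear_combination C (a 0) * C q ^ m * C q * (hm + r1 + r0)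
        - C (a 0) * C q ^ m * C q * chr a c P (m + 2) * hq1
  orth m n hmn := by
    rw [(h.int_wd h0 _).2]
    have aux : ∀ m n, m < n → ∫ y, (chr a c P m * ((X - C x0) * chr a c P n)).eval y ∂M = 0 := by
      intro m n hmn
      rw [h.chr_mul]
      have := integral_add (h.int (chr a c P m * P (n + 1))) (h.int (chr a c P m * P n))
      rw [h.chr_orth m _ (by omega), h.chr_orth m _ hmn, add_zero] at this
      rw [← this]
      refine integral_congr_ae (Filter.Eventually.of_forall fun y => ?_)
      simp only [eval_mul, eval_add]
      ring
    rcases lt_or_gt_of_ne hmn with hl | hl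
    · have e : ∀ y, ((X - C x0) * (C (a 0 * q ^ m) * chr a c P m *
          (C (a 0 * q ^ n) * chr a c P n))).eval y = (a 0 * q ^ m) * (a 0 * q ^ n) *
          (chr a c P m * ((X - C x0) * chr a c P n)).eval y := by
        intro y
        simp only [eval_mul, eval_C]
        ring
      simp only [e]
      rw [integral_const_mul, aux m n hl, mul_zero]
    · have e : ∀ y, ((X - C x0) * (C (a 0 * q ^ m) * chr a c P m *
          (C (a 0 * q ^ n) * chr a c P n))).eval y = (a 0 * q ^ m) * (a 0 * q ^ n) *
          (chr a c P n * ((X - C x0) * chr a c P m)).eval y := by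
        intro y
        simp only [eval_mul, eval_C]
        ring
      simp only [e]
      rw [integral_const_mul, aux n m hl, mul_zero]

lemma qnum_succ_r (q : ℝ) (n : ℕ) : qnum q (n + 1) = qnum q n + q ^ n := by
  simp [qnum, Finset.sum_range_succ]

lemma qnum_succ_l (q : ℝ) (n : ℕ) : qnum q (n + 1) = 1 + q * qnum q n := by
  simp [qnum, Finset.sum_range_succ', Finset.mul_sum, pow_succ, mul_comm, add_comm]

lemma qnum_add (q : ℝ) (n k : ℕ) : qnum q (n + k) = qnum q k + q ^ k * qnum q n := by
  simp only [qnum]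
  rw [add_comm n k, Finset.sum_range_add, Finset.mul_sum]
  simp [pow_add]

lemma qnum_nonneg {q : ℝ} (hq : 0 ≤ q) (n : ℕ) : 0 ≤ qnum q n :=
  Finset.sum_nonneg fun _ _ => pow_nonneg hq _

lemma qnum_le {q : ℝ} (hq : 0 ≤ q) (hq1 : q ≤ 1) (n : ℕ) : qnum q n ≤ n := by
  calc qnum q n ≤ ∑ _i ∈ Finset.range n, (1 : ℝ) :=
        Finset.sum_le_sum fun _ _ => pow_le_one₀ hq hq1
    _ = n := by simp

lemma xPt_step (η θ τ q t : ℝ) (hq0 : 0 < q) (k n : ℕ) :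
    xPt η θ τ q t (k + 1) - xPt η θ τ q t k
      = aCoef η θ τ q (n + k) / q ^ k + q ^ k * cCoef η τ q t (n + 1)
        - aCoef η θ τ q (n + 1 + k) / q ^ k / q - q * (q ^ k * cCoef η τ q t n) := by
  have hq : q ≠ 0 := hq0.ne'
  have hQ : q ^ k ≠ 0 := pow_ne_zero _ hq
  have rel : q ^ k = 1 - (1 - q) * qnum q k := by
    linear_combination qnum_succ_l q k - qnum_succ_r q k
  unfold xPt aCoef cCoef
  rw [qnum_add q n k, qnum_add q (n + 1) k, qnum_succ_r q k, pow_succ]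
  cases n with
  | zero =>
    have z : qnum q 0 = 0 := by simp [qnum]
    have o : qnum q 1 = 1 := by simp [qnum]
    simp only [zero_add, z, o, Nat.sub_self]
    generalize qnum q k = v at *
    generalize q ^ k = Q at *
    generalize η⁻¹ = ζ
    subst rel
    field_simp
    ring
  | succ m =>
    simp only [Nat.add_sub_cancel, qnum_succ_l q]
    generalize qnum q k = v at *
    generalize qnum q m = u at *
    generalize q ^ k = Q at *
    generalize η⁻¹ = ζ
    subst rel
    field_simp
    ring

/-- The polynomials with the factorised recurrence. -/
noncomputable def pPoly (a c : ℕ → ℝ) (x0 : ℝ) : ℕ → ℝ[X]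
  | 0 => 1
  | 1 => C (1 / a 0) * (X - C x0) - 1
  | n + 2 => C (1 / a (n + 1)) * ((X - C x0) * pPoly a c x0 (n + 1)
      - C (c (n + 1)) * (pPoly a c x0 (n + 1) + pPoly a c x0 n)) - pPoly a c x0 (n + 1)

lemma pPoly_recur {a c : ℕ → ℝ} (x0 : ℝ) (ha : ∀ n, 0 < a n) (hc : c 0 = 0) (n : ℕ) :
    (X - C x0) * pPoly a c x0 n = C (a n) * (pPoly a c x0 (n + 1) + pPoly a c x0 n)
      + C (c n) * (pPoly a c x0 n + pPoly a c x0 (n - 1)) := by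
  have inv : ∀ n, C (1 / a n) * C (a n) = (1 : ℝ[X]) := by
    intro n
    rw [← C_mul, one_div_mul_cancel (ha _).ne', C_1]
  cases n with
  | zero =>
    simp only [pPoly, hc, zero_add, C_0]
    linear_combination -(X - C x0) * inv 0
  | succ m =>
    simp only [Nat.add_sub_cancel]
    rw [pPoly]
    linear_combination -((X - C x0) * pPoly a c x0 (m + 1)
      - C (c (m + 1)) * (pPoly a c x0 (m + 1) + pPoly a c x0 m)) * inv (m + 1)

lemma int_poly (M : Measure ℝ) (hmom : ∀ n : ℕ, Integrable (fun y : ℝ => |y| ^ n) M)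
    (R : ℝ[X]) : Integrable (fun y => R.eval y) M := by
  simp only [eval_eq_sum_range]
  refine integrable_finsetSum _ fun n _ => Integrable.const_mul ?_ _
  refine (hmom n).mono' (by fun_prop) (Filter.Eventually.of_forall fun y => ?_)
  simp

lemma bCoef_eq (η θ τ q t : ℝ) (n : ℕ) :
    bCoef η θ τ q t n = -η⁻¹ + aCoef η θ τ q n + cCoef η τ q t n := by
  unfold bCoef aCoef cCoef
  ring

lemma aCoef_pos {η θ τ q : ℝ} (hq0 : 0 < q) (hη : 0 < η) (hθ : 0 ≤ θ) (hτ : 0 ≤ τ) (n : ℕ) :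
    0 < aCoef η θ τ q n := by
  have := qnum_nonneg hq0.le n
  unfold aCoef
  positivity

lemma cCoef_zero (η τ q t : ℝ) : cCoef η τ q t 0 = 0 := by
  simp [cCoef, qnum]

lemma cCoef_pos {η τ q t : ℝ} (hq0 : 0 < q) (hη : 0 < η) (ht : 0 < t) (hτ : 0 ≤ τ) (n : ℕ) :
    0 < cCoef η τ q t (n + 1) := by
  have h1 := qnum_nonneg hq0.le n
  have h2 : 0 < qnum q (n + 1) := by rw [qnum_succ_l]; positivity
  unfold cCoef
  simp only [Nat.add_sub_cancel]
  positivity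

lemma growth {η θ τ q t : ℝ} (hq0 : 0 < q) (hq1 : q ≤ 1) (hη : 0 < η) (hθ : 0 ≤ θ)
    (hτ : 0 ≤ τ) (ht : 0 < t) (k : ℕ) :
    ∃ D : ℝ, 0 < D ∧ ∀ n : ℕ, aCoef η θ τ q (n + k) / q ^ k ≤ D ^ 2 * (n + 1) ^ 2 ∧
      q ^ k * cCoef η τ q t (n + 1) ≤ D ^ 2 * (n + 1) ^ 2 := by
  set E : ℝ := (η⁻¹ + θ + η * τ) * (k + 1) ^ 2 / q ^ k + η * (t + τ) with hE
  have hQ : 0 < q ^ k := pow_pos hq0 k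
  have hQ1 : q ^ k ≤ 1 := pow_le_one₀ hq0.le hq1
  have hη' : 0 < η⁻¹ := inv_pos.2 hη
  have hA : 0 ≤ (η⁻¹ + θ + η * τ) * (k + 1) ^ 2 / q ^ k := by positivity
  have hB : 0 < η * (t + τ) := by positivity
  have hE0 : 0 < E := by linarith
  refine ⟨√E, Real.sqrt_pos.2 hE0, fun n => ?_⟩
  rw [Real.sq_sqrt hE0.le]
  have hn : (0 : ℝ) ≤ n := Nat.cast_nonneg n
  have hk : (0 : ℝ) ≤ k := Nat.cast_nonneg k
  constructor
  · have h1 := qnum_nonneg hq0.le (n + k)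
    have h2 := qnum_le hq0.le hq1 (n + k)
    push_cast at h2
    set s : ℝ := ((k : ℝ) + 1) * (n + 1) with hs
    have hs1 : 1 ≤ s := by nlinarith [mul_nonneg hn hk]
    have hs2 : qnum q (n + k) ≤ s := by nlinarith [mul_nonneg hn hk]
    have hs3 : s ≤ s ^ 2 := by nlinarith
    have hs4 : qnum q (n + k) ^ 2 ≤ s ^ 2 := pow_le_pow_left₀ h1 hs2 2
    have : aCoef η θ τ q (n + k) ≤ (η⁻¹ + θ + η * τ) * s ^ 2 := by
      unfold aCoef
      have g1 : η⁻¹ * 1 ≤ η⁻¹ * s ^ 2 := mul_le_mul_of_nonneg_left (by linarith) hη'.le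
      have g2 : θ * qnum q (n + k) ≤ θ * s ^ 2 := mul_le_mul_of_nonneg_left (by linarith) hθ
      have g3 : (η * τ) * qnum q (n + k) ^ 2 ≤ (η * τ) * s ^ 2 :=
        mul_le_mul_of_nonneg_left hs4 (by positivity)
      linarith
    calc aCoef η θ τ q (n + k) / q ^ k ≤ (η⁻¹ + θ + η * τ) * s ^ 2 / q ^ k :=
          div_le_div_of_nonneg_right this hQ.le
      _ = (η⁻¹ + θ + η * τ) * (k + 1) ^ 2 / q ^ k * (n + 1) ^ 2 := by rw [hs]; ring
      _ ≤ E * (n + 1) ^ 2 := mul_le_mul_of_nonneg_right (by linarith) (by positivity)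
  · have h1 := qnum_nonneg hq0.le n
    have h2 := qnum_le hq0.le hq1 n
    have h3 := qnum_nonneg hq0.le (n + 1)
    have h4 := qnum_le hq0.le hq1 (n + 1)
    push_cast at h4
    have hc := cCoef_pos hq0 hη ht hτ n
    have : cCoef η τ q t (n + 1) ≤ η * (t + τ) * (n + 1) ^ 2 := by
      unfold cCoef
      simp only [Nat.add_sub_cancel]
      have g1 : t + τ * qnum q n ≤ (t + τ) * (n + 1) := by
        have := mul_le_mul_of_nonneg_left h2 hτ
        nlinarith [mul_nonneg ht.le hn]
      calc η * (t + τ * qnum q n) * qnum q (n + 1) ≤ η * ((t + τ) * (n + 1)) * (n + 1) := by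
            apply mul_le_mul _ h4 h3 (by positivity)
            exact mul_le_mul_of_nonneg_left g1 hη.le
        _ = _ := by ring
    calc q ^ k * cCoef η τ q t (n + 1) ≤ 1 * cCoef η τ q t (n + 1) :=
          mul_le_mul_of_nonneg_right hQ1 hc.le
      _ ≤ η * (t + τ) * (n + 1) ^ 2 := by linarith
      _ ≤ E * (n + 1) ^ 2 := mul_le_mul_of_nonneg_right (by linarith) (by positivity)

lemma iterate_main {η θ τ q t : ℝ} (hq0 : 0 < q) (hq1 : q ≤ 1) (hη : 0 < η) (hθ : 0 ≤ θ)
    (hτ : 0 ≤ τ) (ht : 0 < t) (μ : Measure ℝ)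
    (hμ : ∃ P, OGood μ (aCoef η θ τ q) (cCoef η τ q t) (-η⁻¹) P) (k : ℕ) :
    ∃ (M : Measure ℝ) (P : ℕ → ℝ[X]),
      OGood M (fun n => aCoef η θ τ q (n + k) / q ^ k) (fun n => q ^ k * cCoef η τ q t n)
        (xPt η θ τ q t k) P ∧
      ∀ s : Set ℝ, M s = 0 → μ {y | y ∈ s ∧ ∀ j < k, y ≠ xPt η θ τ q t j} = 0 := by
  induction k with
  | zero =>
    obtain ⟨P, hP⟩ := hμ
    refine ⟨μ, P, ?_, ?_⟩
    · have : xPt η θ τ q t 0 = -η⁻¹ := by simp [xPt, qnum]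
      rw [this]
      simpa using hP
    · intro s hs
      simpa using hs
  | succ k ih =>
    obtain ⟨M, P, hP, hn⟩ := ih
    have h0 := hP.null_Iio (growth hq0 hq1 hη hθ hτ ht k)
    have hst := hP.step h0 hq0 (xPt_step η θ τ q t hq0 k)
    have ea : (fun n => aCoef η θ τ q (n + 1 + k) / q ^ k / q)
        = fun n => aCoef η θ τ q (n + (k + 1)) / q ^ (k + 1) := by
      funext n
      rw [div_div, pow_succ, add_assoc, add_comm 1 k]
    have ec : (fun n => q * (q ^ k * cCoef η τ q t n))
        = fun n => q ^ (k + 1) * cCoef η τ q t n := by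
      funext n
      ring
    rw [ea, ec] at hst
    refine ⟨_, _, hst, ?_⟩
    intro s hs
    rw [withDensity_apply_eq_zero (by fun_prop)] at hs
    have hs2 := hn _ (measure_union_null hs h0)
    refine measure_mono_null ?_ hs2
    rintro y ⟨hy, hj⟩
    refine ⟨?_, fun j hjk => hj j (by omega)⟩
    rcases lt_trichotomy y (xPt η θ τ q t k) with hl | hl | hl
    · exact Or.inr hl
    · exact absurd hl (hj k (by omega))
    · refine Or.inl ⟨?_, hy⟩
      simpa using hl

end

/-- for `0 < q ≤ 1`, `η > 0`, `θ ≥ 0`, `τ ≥ 0` and `t > θ/η + (1-q)/η²`, any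
orthogonality measure `μ_t` of `{p_n(·;t)}` satisfies
`μ_t(ℝ \ ({x_0(t), …, x_{k_*}(t)} ∪ [y_*, ∞))) = 0`, where `k_*` is the largest `k` with
`t > θ/η + 2τk` (if `q = 1`), resp. with
`q^{2k} > ((1-q)² + (1-q)ηθ + η²τ)/(η²(t(1-q)+τ))` (if `q < 1`), and
`y_* = max(x_{k_*}(t), x_{k_*+1}(t))`. -/
theorem stmt14 (η θ τ q t : ℝ)
    (hq0 : 0 < q) (hq1 : q ≤ 1) (hη : 0 < η) (hθ : 0 ≤ θ) (hτ : 0 ≤ τ)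
    (ht : θ / η + (1 - q) / η ^ 2 < t)
    (p : ℕ → ℝ → ℝ)
    (hp0 : ∀ y : ℝ, p 0 y = 1)
    (hprec : ∀ (n : ℕ) (y : ℝ), y * p n y =
      aCoef η θ τ q n * p (n + 1) y + bCoef η θ τ q t n * p n y
        + cCoef η τ q t n * p (n - 1) y)
    (μ : Measure ℝ)
    (hprob : IsProbabilityMeasure μ)
    (hmom : ∀ n : ℕ, Integrable (fun y : ℝ => |y| ^ n) μ)
    (horth : ∀ m n : ℕ, m ≠ n → ∫ y, p m y * p n y ∂μ = 0)
    (kstar : ℕ)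
    (hk1 : q = 1 →
      (θ / η + 2 * τ * kstar < t ∧ ∀ k : ℕ, θ / η + 2 * τ * k < t → k ≤ kstar))
    (hklt : q < 1 →
      (((1 - q) ^ 2 + (1 - q) * η * θ + η ^ 2 * τ) / (η ^ 2 * (t * (1 - q) + τ))
          < q ^ (2 * kstar) ∧
        ∀ k : ℕ, ((1 - q) ^ 2 + (1 - q) * η * θ + η ^ 2 * τ) / (η ^ 2 * (t * (1 - q) + τ))
          < q ^ (2 * k) → k ≤ kstar)) :
    μ (((⋃ j ∈ Set.Iic kstar, {xPt η θ τ q t j}) ∪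
        Set.Ici (max (xPt η θ τ q t kstar) (xPt η θ τ q t (kstar + 1))))ᶜ) = 0 := by
  have ht0 : 0 < t := by
    have h1 : 0 ≤ θ / η := div_nonneg hθ hη.le
    have h2 : 0 ≤ (1 - q) / η ^ 2 := div_nonneg (by linarith) (sq_nonneg _)
    linarith
  have ha := aCoef_pos (q := q) hq0 hη hθ hτ
  have hc0 := cCoef_zero η τ q t
  have hgood : OGood μ (aCoef η θ τ q) (cCoef η τ q t) (-η⁻¹)
      (pPoly (aCoef η θ τ q) (cCoef η τ q t) (-η⁻¹)) := by
    have hrec := pPoly_recur (-η⁻¹) ha hc0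
    have hev : ∀ n : ℕ, (∀ y, (pPoly (aCoef η θ τ q) (cCoef η τ q t) (-η⁻¹) n).eval y = p n y) ∧
        ∀ y, (pPoly (aCoef η θ τ q) (cCoef η τ q t) (-η⁻¹) (n + 1)).eval y = p (n + 1) y := by
      have hstep : ∀ n : ℕ,
          (∀ y, (pPoly (aCoef η θ τ q) (cCoef η τ q t) (-η⁻¹) n).eval y = p n y) →
          (∀ y, cCoef η τ q t n * (pPoly (aCoef η θ τ q) (cCoef η τ q t) (-η⁻¹) (n - 1)).eval y
            = cCoef η τ q t n * p (n - 1) y) →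
          ∀ y, (pPoly (aCoef η θ τ q) (cCoef η τ q t) (-η⁻¹) (n + 1)).eval y = p (n + 1) y := by
        intro n h1 h2 y
        have r1 := congrArg (fun R : Polynomial ℝ => R.eval y) (hrec n)
        simp only [Polynomial.eval_mul, Polynomial.eval_add, Polynomial.eval_sub,
          Polynomial.eval_X, Polynomial.eval_C, h1] at r1
        have r2 := hprec n y
        rw [bCoef_eq] at r2
        refine mul_left_cancel₀ (ha n).ne' ?_
        linear_combination r2 - r1 - h2 y
      have hz : ∀ y, (pPoly (aCoef η θ τ q) (cCoef η τ q t) (-η⁻¹) 0).eval y = p 0 y := by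
        intro y
        simp [pPoly, hp0]
      intro n
      induction n with
      | zero => exact ⟨hz, hstep 0 hz fun y => by rw [hc0, zero_mul, zero_mul]⟩
      | succ n ih => exact ⟨ih.2, hstep (n + 1) ih.2 fun y => by rw [Nat.add_sub_cancel, ih.1]⟩
    exact
      { fin := inferInstance
        int := int_poly μ hmom
        apos := ha
        c0 := hc0
        cpos := cCoef_pos hq0 hη ht0 hτ
        P0 := by simp [pPoly]
        recur := hrec
        orth := by
          intro m n hmn
          simp only [Polynomial.eval_mul, (hev _).1]
          exact horth m n hmn }
  have hnull : ∀ k : ℕ, μ {y | y ∈ Set.Iio (xPt η θ τ q t k) ∧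
      ∀ j < k, y ≠ xPt η θ τ q t j} = 0 := by
    intro k
    obtain ⟨M, P, hP, hn⟩ := iterate_main hq0 hq1 hη hθ hτ ht0 μ ⟨_, hgood⟩ k
    exact hn _ (hP.null_Iio (growth hq0 hq1 hη hθ hτ ht0 k))
  refine measure_mono_null ?_ (measure_union_null (hnull kstar) (hnull (kstar + 1)))
  intro y hy
  simp only [Set.mem_compl_iff, Set.mem_union, Set.mem_iUnion, Set.mem_Iic,
    Set.mem_singleton_iff, Set.mem_Ici, not_or, not_exists, not_le, lt_max_iff] at hy
  obtain ⟨h1, h2⟩ := hy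
  rcases h2 with h2 | h2
  · exact Or.inl ⟨h2, fun j hj => h1 j hj.le⟩
  · exact Or.inr ⟨h2, fun j hj => h1 j (by omega)⟩
end

section
/- Let 0 < q ≤ 1, η > 0, θ ≥ 0, τ ≥ 0 and fix s > 0 and x ∈ ℝ. Define β_{n,k}(x,s) by β_{n,k} = 0 for n < 0, k < 0 or k > n, β_{n,0}(x,s) = p_n(x;s), and the recurrence [k+1]_q β_{n,k+1}(x,s) = q^k [n−k]_q β_{n,k}(x,s) + [n]_q β_{n−1,k}(x,s). Then for every real t and all integers 0 ≤ k ≤ n: a_n β_{n+1,k}(x,s) + b_n(t) β_{n,k}(x,s) + c_n(t) β_{n−1,k}(x,s) = A_{k−1}(x,s) β_{n,k−1}(x,s) + B_k(x,t,s) β_{n,k}(x,s) + C_{k+1}(t,s) β_{n,k+1}(x,s). -/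
/-- `[n]_q` for an integer index, with value `0` for negative indices. -/
noncomputable def qnumZ (q : ℝ) (n : ℤ) : ℝ :=
  if 0 ≤ n then ∑ i ∈ Finset.range n.toNat, q ^ i else 0

/-- `a_n = η⁻¹ + θ[n]_q + [n]_q² ητ`. -/
noncomputable def aZ (η θ τ q : ℝ) (n : ℤ) : ℝ :=
  η⁻¹ + θ * qnumZ q n + (qnumZ q n) ^ 2 * η * τ

/-- `b_n(t) = (tη + θ + ([n]_q + [n-1]_q)ητ)[n]_q`. -/
noncomputable def bZ (η θ τ q t : ℝ) (n : ℤ) : ℝ :=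
  (t * η + θ + (qnumZ q n + qnumZ q (n - 1)) * η * τ) * qnumZ q n

/-- `c_n(t) = η(t + τ[n-1]_q)[n]_q`. -/
noncomputable def cZ (η τ q t : ℝ) (n : ℤ) : ℝ :=
  η * (t + τ * qnumZ q (n - 1)) * qnumZ q n

/-- `A_n(x,s) = a_n + q^n x - sη q^n [n]_q`. -/
noncomputable def AZ (η θ τ q x s : ℝ) (n : ℤ) : ℝ :=
  aZ η θ τ q n + q ^ n * x - s * η * q ^ n * qnumZ q n

/-- `B_n(x,t,s) = b_n(t) + q^n x - (1+q) q^{n-1} η s [n]_q`. -/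
noncomputable def BZ (η θ τ q x t s : ℝ) (n : ℤ) : ℝ :=
  bZ η θ τ q t n + q ^ n * x - (1 + q) * q ^ (n - 1) * η * s * qnumZ q n

/-- `C_n(t,s) = c_n(t) - q^{n-1} η s [n]_q`. -/
noncomputable def CZ (η θ τ q t s : ℝ) (n : ℤ) : ℝ :=
  cZ η τ q t n - q ^ (n - 1) * η * s * qnumZ q n

lemma exists_qext (q : ℝ) (hq0 : 0 < q) : ∃ g : ℤ → ℝ, g 0 = 0 ∧
    (∀ z, g (z + 1) = 1 + q * g z) ∧ (∀ m n, g (m + n) = g m + q ^ m * g n) ∧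
    (∀ z, q ^ z = 1 + (q - 1) * g z) ∧ (∀ z, 0 ≤ z → qnumZ q z = g z) := by
  by_cases h1 : q = 1
  · subst h1
    refine ⟨fun z => z, by simp, fun z => by push_cast; ring, fun m n => by simp, fun z => by simp, ?_⟩
    intro z hz
    lift z to ℕ using hz
    simp [qnumZ]
  · have h2 : q - 1 ≠ 0 := sub_ne_zero.mpr h1
    refine ⟨fun z => (q ^ z - 1) / (q - 1), by simp, ?_, ?_, ?_, ?_⟩
    · intro z
      simp only [zpow_add₀ hq0.ne', zpow_one]
      field_simp
      ring
    · intro m n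
      simp only [zpow_add₀ hq0.ne']
      field_simp
      ring
    · intro z
      field_simp
      ring
    · intro z hz
      lift z to ℕ using hz
      simp [qnumZ, geom_sum_eq h1]

/-- for `0 < q ≤ 1`, `η > 0`, `θ ≥ 0`, `τ ≥ 0`, `s > 0`, `x ∈ ℝ`, with
`β_{n,k}(x,s)` defined by the zero conventions, the initial condition `β_{n,0} = p_n(x;s)`
and the recurrence `[k+1]_q β_{n,k+1} = q^k [n-k]_q β_{n,k} + [n]_q β_{n-1,k}`, one has, for
every real `t` and all `0 ≤ k ≤ n`:
`a_n β_{n+1,k} + b_n(t) β_{n,k} + c_n(t) β_{n-1,k}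
  = A_{k-1}(x,s) β_{n,k-1} + B_k(x,t,s) β_{n,k} + C_{k+1}(t,s) β_{n,k+1}`. -/
theorem stmt16 (η θ τ q s x : ℝ)
    (hq0 : 0 < q) (hq1 : q ≤ 1) (hη : 0 < η) (hθ : 0 ≤ θ) (hτ : 0 ≤ τ) (hs : 0 < s)
    (p : ℕ → ℝ)
    (hp0 : p 0 = 1)
    (hprec : ∀ n : ℕ, x * p n =
      aZ η θ τ q n * p (n + 1) + bZ η θ τ q s n * p n + cZ η τ q s n * p (n - 1))
    (β : ℤ → ℤ → ℝ)
    (hzero : ∀ n k : ℤ, n < 0 ∨ k < 0 ∨ n < k → β n k = 0)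
    (hinit : ∀ n : ℕ, β n 0 = p n)
    (hrec : ∀ n k : ℤ, 0 ≤ n → 0 ≤ k →
      qnumZ q (k + 1) * β n (k + 1) =
        q ^ k * qnumZ q (n - k) * β n k + qnumZ q n * β (n - 1) k) :
    ∀ (t : ℝ) (n k : ℤ), 0 ≤ k → k ≤ n →
      aZ η θ τ q n * β (n + 1) k + bZ η θ τ q t n * β n k
          + cZ η τ q t n * β (n - 1) k
        = AZ η θ τ q x s (k - 1) * β n (k - 1) + BZ η θ τ q x t s k * β n k
            + CZ η θ τ q t s (k + 1) * β n (k + 1) := by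
  obtain ⟨g, g0, gs, ga, gq, gz⟩ := exists_qext q hq0
  have r : ∀ m j : ℤ, -1 ≤ j → j ≤ m → 0 ≤ m →
      g (j + 1) * β m (j + 1) = q ^ j * g (m - j) * β m j + g m * β (m - 1) j := by
    intro m j hj hjm hm
    rcases lt_or_ge j 0 with h | h
    · obtain rfl : j = -1 := by omega
      rw [hzero m (-1) (by omega), hzero (m - 1) (-1) (by omega)]
      simp [g0]
    · have := hrec m j hm h
      rwa [gz _ (by omega), gz _ (by omega), gz _ hm] at this
  have hb : ∀ (t : ℝ) (n : ℤ), 0 ≤ n → bZ η θ τ q t n =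
      (t * η + θ + (g n + g (n - 1)) * η * τ) * g n := by
    intro t n hn
    rcases hn.eq_or_lt with h | h
    · subst h
      simp [bZ, gz, g0]
    · rw [bZ, gz n hn, gz (n - 1) (by omega)]
  have hc : ∀ (t : ℝ) (n : ℤ), 0 ≤ n → cZ η τ q t n =
      η * (t + τ * g (n - 1)) * g n := by
    intro t n hn
    rcases hn.eq_or_lt with h | h
    · subst h
      simp [cZ, gz, g0]
    · rw [cZ, gz n hn, gz (n - 1) (by omega)]
  have hA : ∀ n k : ℤ, 0 ≤ k → AZ η θ τ q x s (k - 1) * β n (k - 1) =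
      (η⁻¹ + θ * g (k - 1) + (g (k - 1)) ^ 2 * η * τ + q ^ (k - 1) * x
        - s * η * q ^ (k - 1) * g (k - 1)) * β n (k - 1) := by
    intro n k hk
    rcases hk.eq_or_lt with h | h
    · subst h
      rw [hzero n (0 - 1) (by omega)]
      simp
    · rw [AZ, aZ, gz (k - 1) (by omega)]
  intro t
  suffices H : ∀ k : ℕ, ∀ n : ℤ, (k : ℤ) ≤ n →
      (η⁻¹ + θ * g n + (g n) ^ 2 * η * τ) * β (n + 1) k
        + (t * η + θ + (g n + g (n - 1)) * η * τ) * g n * β n k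
        + η * (t + τ * g (n - 1)) * g n * β (n - 1) k
      = (η⁻¹ + θ * g (k - 1) + (g (k - 1)) ^ 2 * η * τ + q ^ ((k : ℤ) - 1) * x
          - s * η * q ^ ((k : ℤ) - 1) * g (k - 1)) * β n (k - 1)
        + ((t * η + θ + (g k + g (k - 1)) * η * τ) * g k + q ^ (k : ℤ) * x
          - (1 + q) * q ^ ((k : ℤ) - 1) * η * s * g k) * β n k
        + (η * (t + τ * g k) * g (k + 1) - q ^ (k : ℤ) * η * s * g (k + 1)) * β n (k + 1) by
    intro n k hk hkn
    have hn : 0 ≤ n := hk.trans hkn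
    rw [hA n k hk, BZ, CZ, aZ, hb t n hn, hc t n hn, hb t k hk, hc t (k + 1) (by omega),
      gz n hn, gz k hk, gz (k + 1) (by omega), add_sub_cancel_right]
    lift k to ℕ using hk
    exact H k n hkn
  intro k
  induction k with
  | zero =>
    intro n hn
    have hn' : 0 ≤ n := by simpa using hn
    have h1 := r n 0 (by omega) hn' hn'
    have hz := hzero n (0 - 1) (by omega)
    have h2 : x * β n 0 = aZ η θ τ q n * β (n + 1) 0 + bZ η θ τ q s n * β n 0
        + cZ η τ q s n * β (n - 1) 0 := by
      lift n to ℕ using hn'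
      have := hprec n
      rcases Nat.eq_zero_or_pos n with h | h
      · subst h
        have e : cZ η τ q s ((0 : ℕ) : ℤ) = 0 := by
          rw [hc s _ (by simp)]
          simp [g0]
        have h3 : β 1 0 = p 1 := by simpa using hinit 1
        rw [e] at this ⊢
        rw [hinit 0]
        simpa [h3] using this
      · have h3 := hinit (n + 1)
        have h4 := hinit (n - 1)
        push_cast [Nat.cast_sub h] at h3 h4
        rw [hinit n, h3, h4]
        exact this
    rw [aZ, hb s n hn', hc s n hn', gz n hn'] at h2
    have g1 := gs 0
    simp only [Nat.cast_zero, g0, hz, zpow_zero, zero_add, mul_zero, add_zero, sub_zero] at *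
    simp only [g1] at *
    linear_combination -h2 - η * (t - s) * h1
  | succ k ih =>
    intro n hn
    push_cast at hn ⊢
    have hk : (0 : ℤ) ≤ k := by positivity
    generalize (k : ℤ) = k at *
    have hkp : g (k + 1) ≠ 0 := by
      rw [← gz (k + 1) (by omega), qnumZ, if_pos (by omega)]
      refine (Finset.sum_pos (fun i _ => by positivity) ?_).ne'
      simp
      omega
    have H1 := ih n (by omega)
    have H2 := ih (n - 1) (by omega)
    have r1 := r (n + 1) k (by omega) (by omega) (by omega)
    have r2 := r n k (by omega) (by omega) (by omega)
    have r3 := r (n - 1) k (by omega) (by omega) (by omega)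
    have r4 := r n (k + 1) (by omega) (by omega) (by omega)
    have r5 := r n (k - 1) (by omega) (by omega) (by omega)
    obtain ⟨d, rfl⟩ : ∃ d, n = k + 2 + d := ⟨n - (k + 2), by ring⟩
    obtain ⟨j, rfl⟩ : ∃ j, k = j + 1 := ⟨k - 1, by ring⟩
    apply mul_left_cancel₀ hkp
    have e1 : j + 1 + 2 + d - 1 = j + 1 + 1 + d := by ring
    have e2 : j + 1 + 1 + d - 1 = j + 1 + d := by ring
    have e3 : j + 1 + 2 + d + 1 - (j + 1) = d + 1 + 1 + 1 := by ring
    have e4 : j + 1 + 2 + d - (j + 1) = d + 1 + 1 := by ring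
    have e5 : j + 1 + 1 + d - (j + 1) = d + 1 := by ring
    have e6 : j + 1 + 2 + d - (j + 1 + 1) = d + 1 := by ring
    have e7 : j + 1 + 2 + d - j = d + 1 + 1 + 1 := by ring
    have e8 : j + 1 + 2 + d + 1 - 1 = j + 1 + 2 + d := by ring
    have e9 : j + 1 + 1 + d + 1 = j + 1 + 2 + d := by ring
    simp only [e1, e2, e3, e4, e5, e6, e7, e8, e9, add_sub_cancel_right] at *
    have f0 : g (j + 1 + d) = g (j + 1) + q ^ (j + 1) * g d := ga _ _
    have f1 : g (j + 1 + 1 + d) = 1 + q * g (j + 1 + d) := by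
      rw [← gs]; congr 1; ring
    have f2 : g (j + 1 + 2 + d) = 1 + q * g (j + 1 + 1 + d) := by
      rw [← gs]; congr 1; ring
    have f3 : g (j + 1 + 2 + d + 1) = 1 + q * g (j + 1 + 2 + d) := gs _
    simp only [f3, f2, f1, f0, gq, gs] at *
    generalize g j = K at *
    generalize g d = M at *
    generalize β (j + 1 + 2 + d + 1) (j + 1) = y1 at *
    generalize β (j + 1 + 2 + d) (j + 1) = y2 at *
    generalize β (j + 1 + 1 + d) (j + 1) = y3 at *
    generalize β (j + 1 + d) (j + 1) = y4 at *
    generalize β (j + 1 + 2 + d + 1) (j + 1 + 1) = z1 at *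
    generalize β (j + 1 + 2 + d) (j + 1 + 1) = z2 at *
    generalize β (j + 1 + 1 + d) (j + 1 + 1) = z3 at *
    generalize β (j + 1 + d) (j + 1 + 1) = z4 at *
    generalize η⁻¹ = ι at *
    clear hrec hprec hinit hzero hA hb hc r ih
    linear_combination (1+(q-1)*(1+q*K)) * (1+q*(1+q*(1+q*M))) * H1 + q * (1+q*(1+q*((1+q*K)+(1+(q-1)*(1+q*K))*M))) * H2
      + (ι + θ * (1+q*(1+q*((1+q*K)+(1+(q-1)*(1+q*K))*M))) + (1+q*(1+q*((1+q*K)+(1+(q-1)*(1+q*K))*M))) ^ 2 * η * τ) * r1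
      + (t * η + θ + ((1+q*(1+q*((1+q*K)+(1+(q-1)*(1+q*K))*M))) + (1+q*((1+q*K)+(1+(q-1)*(1+q*K))*M))) * η * τ) * (1+q*(1+q*((1+q*K)+(1+(q-1)*(1+q*K))*M))) * r2
      + η * (t + τ * (1+q*((1+q*K)+(1+(q-1)*(1+q*K))*M))) * (1+q*(1+q*((1+q*K)+(1+(q-1)*(1+q*K))*M))) * r3
      - ((t * η + θ + ((1+q*(1+q*K)) + (1+q*K)) * η * τ) * (1+q*(1+q*K)) + (1+(q-1)*(1+q*(1+q*K))) * x - (1 + q) * (1+(q-1)*(1+q*K)) * η * s * (1+q*(1+q*K))) * r2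
      - η * (t + τ * (1+q*(1+q*K)) - (1+(q-1)*(1+q*(1+q*K))) * s) * ((1+q*(1+q*K)) * r4 + (1+(q-1)*(1+q*(1+q*K))) * (1+q*M) * r2 + (1+q*(1+q*((1+q*K)+(1+(q-1)*(1+q*K))*M))) * r3)
      - q * (ι + θ * K + K ^ 2 * η * τ + (1+(q-1)*K) * x - s * η * (1+(q-1)*K) * K) * r5
      + η * (t + τ * (1+q*K) - (1+(q-1)*(1+q*K)) * s) * ((1+(q-1)*(1+q*K)) * (1+q*(1+q*(1+q*M))) * r2 + q * (1+q*(1+q*((1+q*K)+(1+(q-1)*(1+q*K))*M))) * r3)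
end
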